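/- Let V and V' be finite-dimensional vector spaces over a field K, and g, g' endomorphisms of V, V'. Then each coefficient of the characteristic polynomial of g ⊗ g' on V ⊗ V' is an integral polynomial expression (independent of K, g, g') in the coefficients of the characteristic polynomials of g on V and of g' on V'. In particular, if these two characteristic polynomials have coefficients in a subring R ⊆ K, then so does the characteristic polynomial of g ⊗ g'. -/

import Mathlib

open Polynomial

open Matrix in
theorem charpolyRev_kronecker_aux {R m n : Type*} [CommRing R] [Fintype m] [DecidableEq m]
    [Fintype n] [DecidableEq n] (B : Matrix m m R) (A : Matrix n n R) :
    (kroneckerMap (· * ·) B A).charpolyRev =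
      (aeval (R := R) ((X : R[X]) • A.map C) B.charpolyRev).det := by
  have h := Matrix.det_det (M := (1 - (X : R[X]) • B.map C : Matrix m m R[X]))
    (f := (aeval (R := R) ((X : R[X]) • A.map C) : R[X] →ₐ[R] Matrix n n R[X]).toRingHom)
  rw [charpolyRev, charpolyRev]
  refine Eq.trans ?_ h.symm
  congr 1
  ext ⟨i, k⟩ ⟨j, l⟩ : 1
  simp only [comp_apply, map_apply, Matrix.sub_apply, Matrix.smul_apply, kroneckerMap_apply]
  by_cases hij : i = j
  · subst hij
    simp [Matrix.one_apply, Algebra.algebraMap_eq_smul_one, Matrix.smul_apply, Matrix.mul_apply,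
      Polynomial.smul_eq_C_mul]
  · simp [Matrix.one_apply, hij, Algebra.algebraMap_eq_smul_one, Matrix.smul_apply,
      Matrix.mul_apply, Polynomial.smul_eq_C_mul]

theorem reverse_inj_aux {R : Type*} [CommRing R] {p q : R[X]} (hd : p.natDegree = q.natDegree)
    (h : p.reverse = q.reverse) : p = q := by
  unfold Polynomial.reverse at h
  rw [hd] at h
  have := congrArg (Polynomial.reflect q.natDegree) h
  simpa using this

open Matrix in
theorem charpoly_kronecker_congr_left {R m m' n : Type*} [CommRing R] [Nontrivial R]
    [Fintype m] [DecidableEq m] [Fintype m'] [DecidableEq m']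
    [Fintype n] [DecidableEq n] (B : Matrix m m R) (B' : Matrix m' m' R) (A : Matrix n n R)
    (h : B.charpoly = B'.charpoly) :
    (kroneckerMap (· * ·) B A).charpoly = (kroneckerMap (· * ·) B' A).charpoly := by
  apply reverse_inj_aux
  · have := congrArg natDegree h
    simp only [charpoly_natDegree_eq_dim] at this
    simp [charpoly_natDegree_eq_dim, this]
  · rw [reverse_charpoly, reverse_charpoly, charpolyRev_kronecker_aux, charpolyRev_kronecker_aux,
      ← reverse_charpoly, ← reverse_charpoly, h]

open Matrix in
theorem charpoly_kronecker_swap {R m n : Type*} [CommRing R]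
    [Fintype m] [DecidableEq m]
    [Fintype n] [DecidableEq n] (B : Matrix m m R) (A : Matrix n n R) :
    (kroneckerMap (· * ·) B A).charpoly = (kroneckerMap (· * ·) A B).charpoly := by
  rw [← charpoly_reindex (Equiv.prodComm m n)]
  congr 1
  ext ⟨i, k⟩ ⟨j, l⟩
  simp [mul_comm]

open Matrix in
theorem charpoly_kronecker_congr {R m m' n n' : Type*} [CommRing R] [Nontrivial R]
    [Fintype m] [DecidableEq m] [Fintype m'] [DecidableEq m']
    [Fintype n] [DecidableEq n] [Fintype n'] [DecidableEq n']
    (B : Matrix m m R) (B' : Matrix m' m' R) (A : Matrix n n R) (A' : Matrix n' n' R)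
    (h : B.charpoly = B'.charpoly) (h' : A.charpoly = A'.charpoly) :
    (kroneckerMap (· * ·) B A).charpoly = (kroneckerMap (· * ·) B' A').charpoly := by
  rw [charpoly_kronecker_congr_left B B' A h, charpoly_kronecker_swap,
    charpoly_kronecker_congr_left A A' B' h', charpoly_kronecker_swap]

theorem exists_matrix_charpoly {R : Type*} [CommRing R] [Nontrivial R] (f : R[X]) (hf : f.Monic) :
    ∃ (d : ℕ) (M : Matrix (Fin d) (Fin d) R), M.charpoly = f := by
  let h := AdjoinRoot.powerBasis' hf
  refine ⟨h.dim, Algebra.leftMulMatrix h.basis h.gen, ?_⟩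
  have hm := Matrix.charpoly_monic (Algebra.leftMulMatrix h.basis h.gen)
  have hd := Matrix.charpoly_natDegree_eq_dim (Algebra.leftMulMatrix h.basis h.gen)
  have h0 : aeval h.gen (Algebra.leftMulMatrix h.basis h.gen).charpoly = 0 := by
    apply (injective_iff_map_eq_zero (Algebra.leftMulMatrix h.basis)).mp
      (Algebra.leftMulMatrix_injective h.basis)
    rw [← Polynomial.aeval_algHom_apply, Matrix.aeval_self_charpoly]
  have h1 : f ∣ (Algebra.leftMulMatrix h.basis h.gen).charpoly := by
    rw [← AdjoinRoot.mk_eq_zero, ← AdjoinRoot.aeval_eq]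
    exact h0
  refine (Polynomial.eq_of_monic_of_dvd_of_natDegree_le hf hm h1 ?_)
  rw [hd]
  simp [h]

theorem exists_univ_poly {σ : Type} (n : ℕ) (s : Fin (n + 1) → σ) :
    ∃ f : (MvPolynomial σ ℤ)[X], f.Monic ∧ ∀ (K : Type) [Field K] (v : σ → K) (p : K[X]),
      p.Monic → p.natDegree = n → (∀ i : Fin (n + 1), v (s i) = p.coeff i) →
      f.map (MvPolynomial.aeval v : MvPolynomial σ ℤ →ₐ[ℤ] K).toRingHom = p := by
  refine ⟨X ^ n + ∑ i : Fin n, C (MvPolynomial.X (s i.castSucc)) * X ^ (i : ℕ), ?_, ?_⟩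
  · apply Polynomial.monic_X_pow_add
    refine lt_of_le_of_lt (Polynomial.degree_sum_le _ _) ?_
    rw [Finset.sup_lt_iff (WithBot.bot_lt_coe _)]
    intro i _
    exact lt_of_le_of_lt (Polynomial.degree_C_mul_X_pow_le _ _) (by exact_mod_cast i.2)
  · intro K _ v p hp hd hv
    conv_rhs => rw [hp.as_sum, hd]
    rw [Finset.sum_range]
    simp [Polynomial.map_sum, hv]

/-- Each coefficient of the characteristic polynomial of `g ⊗ g'` on
`V ⊗ V'` is given by a universal integral polynomial (independent of the field `K` and
of `g`, `g'`, depending only on the dimensions) in the coefficients of the characteristic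
polynomials of `g` and `g'`.  In particular, if both characteristic polynomials have all
their coefficients in a subring `R ⊆ K`, then so does the characteristic polynomial of
`g ⊗ g'`. -/
theorem charpoly_tensorProduct_coeff_universal (n n' k : ℕ) :
    (∃ P : MvPolynomial (Fin (n + 1) ⊕ Fin (n' + 1)) ℤ,
      ∀ (K : Type) [Field K]
        (V V' : Type) [AddCommGroup V] [Module K V] [AddCommGroup V'] [Module K V']
        [FiniteDimensional K V] [FiniteDimensional K V'],
        Module.finrank K V = n → Module.finrank K V' = n' →
        ∀ (g : V →ₗ[K] V) (g' : V' →ₗ[K] V'),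
          (TensorProduct.map g g').charpoly.coeff k
            = MvPolynomial.aeval
                (Sum.elim (fun i : Fin (n + 1) => g.charpoly.coeff i)
                  (fun j : Fin (n' + 1) => g'.charpoly.coeff j)) P)
    ∧
    (∀ (K : Type) [Field K]
      (V V' : Type) [AddCommGroup V] [Module K V] [AddCommGroup V'] [Module K V']
      [FiniteDimensional K V] [FiniteDimensional K V']
      (g : V →ₗ[K] V) (g' : V' →ₗ[K] V') (R : Subring K),
      (∀ i, g.charpoly.coeff i ∈ R) → (∀ i, g'.charpoly.coeff i ∈ R) →
      ∀ i, (TensorProduct.map g g').charpoly.coeff i ∈ R) := by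
  have key : ∀ n n' k : ℕ, ∃ P : MvPolynomial (Fin (n + 1) ⊕ Fin (n' + 1)) ℤ,
      ∀ (K : Type) [Field K]
        (V V' : Type) [AddCommGroup V] [Module K V] [AddCommGroup V'] [Module K V']
        [FiniteDimensional K V] [FiniteDimensional K V'],
        Module.finrank K V = n → Module.finrank K V' = n' →
        ∀ (g : V →ₗ[K] V) (g' : V' →ₗ[K] V'),
          (TensorProduct.map g g').charpoly.coeff k
            = MvPolynomial.aeval
                (Sum.elim (fun i : Fin (n + 1) => g.charpoly.coeff i)
                  (fun j : Fin (n' + 1) => g'.charpoly.coeff j)) P := by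
    intro n n' k
    obtain ⟨f, hf, hfK⟩ := exists_univ_poly (σ := Fin (n + 1) ⊕ Fin (n' + 1)) n Sum.inl
    obtain ⟨f', hf', hfK'⟩ := exists_univ_poly (σ := Fin (n + 1) ⊕ Fin (n' + 1)) n' Sum.inr
    obtain ⟨d, M, hM⟩ := exists_matrix_charpoly f hf
    obtain ⟨d', M', hM'⟩ := exists_matrix_charpoly f' hf'
    refine ⟨(Matrix.kroneckerMap (· * ·) M M').charpoly.coeff k, ?_⟩
    intro K _ V V' _ _ _ _ _ _ hV hV' g g'
    set v : Fin (n + 1) ⊕ Fin (n' + 1) → K :=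
      Sum.elim (fun i : Fin (n + 1) => g.charpoly.coeff i)
        (fun j : Fin (n' + 1) => g'.charpoly.coeff j) with hv
    let φ : MvPolynomial (Fin (n + 1) ⊕ Fin (n' + 1)) ℤ →+* K :=
      (MvPolynomial.aeval v : MvPolynomial _ ℤ →ₐ[ℤ] K).toRingHom
    have e1 : f.map φ = g.charpoly := hfK K v g.charpoly g.charpoly_monic
      (by rw [LinearMap.charpoly_natDegree, hV]) (fun i => rfl)
    have e2 : f'.map φ = g'.charpoly := hfK' K v g'.charpoly g'.charpoly_monic
      (by rw [LinearMap.charpoly_natDegree, hV']) (fun i => rfl)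
    let b := Module.finBasis K V
    let b' := Module.finBasis K V'
    have e3 : (TensorProduct.map g g').charpoly
        = (Matrix.kroneckerMap (· * ·) M M').charpoly.map φ := by
      rw [← LinearMap.charpoly_toMatrix _ (b.tensorProduct b'), TensorProduct.toMatrix_map,
        ← Matrix.charpoly_map]
      have : (Matrix.kroneckerMap (· * ·) M M').map φ
          = Matrix.kroneckerMap (· * ·) (M.map φ) (M'.map φ) := by
        ext ⟨i, k⟩ ⟨j, l⟩
        simp
      rw [this]
      apply charpoly_kronecker_congr
      · rw [LinearMap.charpoly_toMatrix, Matrix.charpoly_map, hM, e1]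
      · rw [LinearMap.charpoly_toMatrix, Matrix.charpoly_map, hM', e2]
    rw [e3, Polynomial.coeff_map]
    rfl
  refine ⟨key n n' k, ?_⟩
  intro K _ V V' _ _ _ _ _ _ g g' R h h' i
  obtain ⟨P, hP⟩ := key (Module.finrank K V) (Module.finrank K V') i
  rw [hP K V V' rfl rfl g g']
  have mem : ∀ Q : MvPolynomial (Fin (Module.finrank K V + 1) ⊕ Fin (Module.finrank K V' + 1)) ℤ,
      MvPolynomial.aeval
        (Sum.elim (fun i : Fin (Module.finrank K V + 1) => g.charpoly.coeff i)
          (fun j : Fin (Module.finrank K V' + 1) => g'.charpoly.coeff j)) Q ∈ R := by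
    intro Q
    induction Q using MvPolynomial.induction_on with
    | C a => simp
    | add p q hp hq => rw [map_add]; exact R.add_mem hp hq
    | mul_X p j hp =>
      rw [map_mul, MvPolynomial.aeval_X]
      refine R.mul_mem hp ?_
      rcases j with j | j
      · exact h j
      · exact h' j
  exact mem P
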